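/- Let d ≥ 1 and let Φ be a complex-valued Schwartz function on ℝ^d with ∫_{ℝ^d} Φ = 0. There is a constant C depending only on d and Φ with the following property. Let N ≥ 0 and let f : ℝ^d → ℂ be measurable with ∫_{ℝ^d} |f(t)|²/(1+|t|)^{d+1} dt < ∞ and such that for every ball B ⊂ ℝ^d, (1/|B|) ∫_B |f(t) − f_B|² dt ≤ N², where f_B = (1/|B|)∫_B f. Then for every ball B of radius r: ∫_B ∫_0^r |Φ_ε * f(s)|² (dε/ε) ds ≤ C N² |B|. -/

import Mathlib

open MeasureTheory Real Complex

noncomputable section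

/-- `ℝ^d`. -/
abbrev Ed (d : ℕ) := EuclideanSpace ℝ (Fin d)

/-- Dilation `Φ_ε(s) = ε^{-d} Φ(s/ε)`. -/
def dil (d : ℕ) (Φ : Ed d → ℂ) (ε : ℝ) (s : Ed d) : ℂ :=
  ((ε : ℂ) ^ d)⁻¹ * Φ (ε⁻¹ • s)

/-- Convolution `g * f (s) = ∫ g(s-t) f(t) dt`. -/
def cnv (d : ℕ) (g f : Ed d → ℂ) (s : Ed d) : ℂ :=
  ∫ t, g (s - t) * f t

/-- Mean of `f` over the ball of center `z` and radius `r`. -/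
def avgB (d : ℕ) (f : Ed d → ℂ) (z : Ed d) (r : ℝ) : ℂ :=
  (volume (Metric.ball z r)).toReal⁻¹ • ∫ t in Metric.ball z r, f t

/-!
Fix a ball `B` of radius `r` and let `c` be the mean of `f` over `2B`. As `∫ Φ = 0`, replacing `f`
by `f - c` does not change `Φ_ε * f`. The local part `(f - c) 1_{2B}` has squared `L²` norm at most
`N² |2B|`, and by Plancherel its square function is controlled by the supremum over `ξ` of
`∫ |Φ̂(εξ)|² dε/ε`, which is finite because `Φ̂` vanishes at `0` and decays. For the remaining part,
the means of `f` over `2^k B` and `2B` differ by `O(k N)`; against the kernel bound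
`|Φ_ε(x)| ≲ ε / |x|^{n+1}` the dyadic annuli sum to `O(N ε / r)`, whose square is integrable on the
box over `B` against `ds dε/ε`, with integral `O(N² |B|)`.
-/

section MeanOscillation

open Metric Module
open scoped NNReal ENNReal

theorem lintegral_enorm_sq {α V : Type*} [MeasurableSpace α] [ENorm V] (μ : Measure α)
    (f : α → V) : ∫⁻ x, ‖f x‖ₑ ^ 2 ∂μ = eLpNorm f 2 μ ^ 2 := by
  have h := eLpNorm_nnreal_pow_eq_lintegral (μ := μ) (f := f) (p := 2) two_ne_zero
  simpa [ENNReal.rpow_ofNat] using h.symm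

theorem compl_ball_subset_iUnion_sdiff {X : Type*} [PseudoMetricSpace X] (z : X) {R : ℝ}
    (hR : 0 < R) :
    (ball z R)ᶜ ⊆ ⋃ k : ℕ, ball z (2 ^ (k + 1) * R) \ ball z (2 ^ k * R) := by
  intro t ht
  have hRt : 1 ≤ dist t z / R := (one_le_div₀ hR).2 (by simpa using ht)
  obtain ⟨k, hk, hk'⟩ := exists_nat_pow_near hRt one_lt_two
  rw [le_div_iff₀ hR] at hk
  rw [div_lt_iff₀ hR] at hk'
  exact Set.mem_iUnion.2 ⟨k, hk', not_lt.2 hk⟩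

theorem enorm_setAverage_sub_mul_le {α F : Type*} [MeasurableSpace α] [NormedAddCommGroup F]
    [NormedSpace ℝ F] [CompleteSpace F] {μ : Measure α} {f : α → F} {s : Set α}
    (hs : μ s ≠ ∞) (hf : IntegrableOn f s μ) (c : F) :
    ‖⨍ t in s, f t ∂μ - c‖ₑ * μ s ≤ ∫⁻ t in s, ‖f t - c‖ₑ ∂μ := by
  rcases eq_or_ne (μ s) 0 with hs0 | hs0
  · simp [hs0]
  have hreal : μ.real s ≠ 0 := by simp [measureReal_ne_zero_iff hs, hs0]
  have hmean : μ.real s • (⨍ t in s, f t ∂μ - c) = ∫ t in s, (f t - c) ∂μ := by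
    rw [integral_sub hf (integrableOn_const hs), setIntegral_const, setAverage_eq, smul_sub,
      smul_inv_smul₀ hreal]
  calc ‖⨍ t in s, f t ∂μ - c‖ₑ * μ s = ‖μ.real s • (⨍ t in s, f t ∂μ - c)‖ₑ := by
        rw [enorm_smul, Real.enorm_of_nonneg measureReal_nonneg, ofReal_measureReal hs, mul_comm]
    _ ≤ ∫⁻ t in s, ‖f t - c‖ₑ ∂μ := hmean ▸ enorm_integral_le_lintegral_enorm _

theorem lintegral_enorm_le_of_lintegral_sq_le {α V : Type*} [MeasurableSpace α]
    [NormedAddCommGroup V] {μ : Measure α} {g : α → V} (hg : AEStronglyMeasurable g μ) {N : ℝ≥0∞}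
    (h : ∫⁻ x, ‖g x‖ₑ ^ 2 ∂μ ≤ N ^ 2 * μ Set.univ) : ∫⁻ x, ‖g x‖ₑ ∂μ ≤ N * μ Set.univ := by
  have hsqrt : (μ Set.univ ^ (2⁻¹ : ℝ)) ^ 2 = μ Set.univ := by
    rw [← ENNReal.rpow_natCast, ← ENNReal.rpow_mul]; simp
  have hhalf := eLpNorm_le_eLpNorm_mul_rpow_measure_univ (p := 1) (q := 2) one_le_two hg
  rw [eLpNorm_one_eq_lintegral_enorm] at hhalf
  norm_num at hhalf
  have htwo : eLpNorm g 2 μ ≤ N * μ Set.univ ^ (2⁻¹ : ℝ) := by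
    rw [← ENNReal.pow_le_pow_left_iff two_ne_zero, ← lintegral_enorm_sq, mul_pow, hsqrt]
    exact h
  calc ∫⁻ x, ‖g x‖ₑ ∂μ ≤ eLpNorm g 2 μ * μ Set.univ ^ (2⁻¹ : ℝ) := by simpa using hhalf
    _ ≤ N * μ Set.univ ^ (2⁻¹ : ℝ) * μ Set.univ ^ (2⁻¹ : ℝ) := by gcongr
    _ = N * μ Set.univ := by rw [mul_assoc, ← sq, hsqrt]

theorem ofReal_dyadic_pow_div {R : ℝ} (hR : 0 < R) (k n : ℕ) :
    ENNReal.ofReal (2 ^ (k + 1) * R) ^ n / ENNReal.ofReal (2 ^ k * R) ^ (n + 1) =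
      2 ^ n * 2⁻¹ ^ k / ENNReal.ofReal R := by
  have htwo : (2⁻¹ : ℝ≥0∞) = ENNReal.ofReal 2⁻¹ := by
    rw [ENNReal.ofReal_inv_of_pos two_pos, ENNReal.ofReal_ofNat]
  rw [htwo, ← ENNReal.ofReal_ofNat, ← ENNReal.ofReal_pow (by positivity),
    ← ENNReal.ofReal_pow (by positivity), ← ENNReal.ofReal_div_of_pos (by positivity),
    ← ENNReal.ofReal_pow (by positivity), ← ENNReal.ofReal_pow (by positivity),
    ← ENNReal.ofReal_mul (by positivity), ← ENNReal.ofReal_div_of_pos hR]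
  congr 1
  simp only [mul_pow, pow_succ, inv_pow]
  field_simp

theorem tsum_add_two_mul_inv_two_pow : ∑' k : ℕ, ((k : ℝ≥0∞) + 2) * 2⁻¹ ^ k = 6 := by
  have hsum : HasSum (fun k : ℕ => ((k : ℝ≥0) + 2) * 2⁻¹ ^ k) 6 := by
    rw [← NNReal.hasSum_coe]
    convert! (hasSum_coe_mul_geometric_of_norm_lt_one (r := (2⁻¹ : ℝ)) (by norm_num)).add
      (hasSum_geometric_two.mul_left 2) using 1
    · ext k; push_cast; ring
    · norm_num
  simpa [ENNReal.inv_pow] using (ENNReal.hasSum_coe.2 hsum).tsum_eq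

variable {E F : Type*} [NormedAddCommGroup E] [MeasurableSpace E]
  [NormedAddCommGroup F] [NormedSpace ℝ F]

/-- `f` is a function of bounded mean oscillation with (square) BMO seminorm at most `N`. Square
integrability on balls is part of the definition, so that no average in it is a junk value. -/
structure HasBMOBound (μ : Measure E) (f : E → F) (N : ℝ≥0) : Prop where
  memLp_ball (z : E) (r : ℝ) : MemLp f 2 (μ.restrict (ball z r))
  lintegral_ball_le (z : E) {r : ℝ} (hr : 0 < r) :
    ∫⁻ t in ball z r, ‖f t - ⨍ u in ball z r, f u ∂μ‖ₑ ^ 2 ∂μ ≤ N ^ 2 * μ (ball z r)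

namespace HasBMOBound

variable [NormedSpace ℝ E] [FiniteDimensional ℝ E] {μ : Measure E} [μ.IsAddHaarMeasure]
  {f : E → F} {N : ℝ≥0}

theorem memLp_sub_const (hf : HasBMOBound μ f N) (z : E) (r : ℝ) (c : F) :
    MemLp (fun t => f t - c) 2 (μ.restrict (ball z r)) :=
  have := isFiniteMeasure_restrict.2 (measure_ball_lt_top (μ := μ) (x := z) (r := r)).ne
  (hf.memLp_ball z r).sub (memLp_const c)

theorem integrableOn_ball (hf : HasBMOBound μ f N) (z : E) (r : ℝ) : IntegrableOn f (ball z r) μ :=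
  have := isFiniteMeasure_restrict.2 (measure_ball_lt_top (μ := μ) (x := z) (r := r)).ne
  (hf.memLp_ball z r).integrable one_le_two

theorem lintegral_enorm_sub_average_le (hf : HasBMOBound μ f N) (z : E) {r : ℝ} (hr : 0 < r) :
    ∫⁻ t in ball z r, ‖f t - ⨍ u in ball z r, f u ∂μ‖ₑ ∂μ ≤ N * μ (ball z r) := by
  simpa using lintegral_enorm_le_of_lintegral_sq_le
    (hf.memLp_sub_const z r (⨍ u in ball z r, f u ∂μ)).aestronglyMeasurable
    (by simpa using hf.lintegral_ball_le z hr)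

variable [BorelSpace E] [CompleteSpace F]

theorem edist_average_two_mul_le (hf : HasBMOBound μ f N) (z : E) {r : ℝ} (hr : 0 < r) :
    edist (⨍ t in ball z r, f t ∂μ) (⨍ t in ball z (2 * r), f t ∂μ) ≤ 2 ^ finrank ℝ E * N := by
  set c := ⨍ t in ball z (2 * r), f t ∂μ
  have hpos : μ (ball z r) ≠ 0 := (measure_ball_pos μ z hr).ne'
  have hfin : μ (ball z r) ≠ ∞ := measure_ball_lt_top.ne
  rw [edist_eq_enorm_sub, ← ENNReal.mul_le_mul_iff_left hpos hfin]
  calc ‖⨍ t in ball z r, f t ∂μ - c‖ₑ * μ (ball z r)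
      ≤ ∫⁻ t in ball z r, ‖f t - c‖ₑ ∂μ :=
        enorm_setAverage_sub_mul_le hfin (hf.integrableOn_ball z r) c
    _ ≤ ∫⁻ t in ball z (2 * r), ‖f t - c‖ₑ ∂μ :=
        lintegral_mono_set (ball_subset_ball (by linarith))
    _ ≤ N * μ (ball z (2 * r)) := hf.lintegral_enorm_sub_average_le z (by positivity)
    _ = 2 ^ finrank ℝ E * N * μ (ball z r) := by
        rw [Measure.addHaar_ball_mul_of_pos μ z two_pos, ← Measure.addHaar_ball_center μ z r,
          ENNReal.ofReal_pow zero_le_two, ENNReal.ofReal_ofNat]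
        ring

theorem edist_average_two_pow_mul_le (hf : HasBMOBound μ f N) (z : E) {r : ℝ} (hr : 0 < r)
    (k : ℕ) :
    edist (⨍ t in ball z r, f t ∂μ) (⨍ t in ball z (2 ^ k * r), f t ∂μ) ≤
      k * (2 ^ finrank ℝ E * N) := by
  have hstep : ∀ {j}, j < k →
      edist (⨍ t in ball z (2 ^ j * r), f t ∂μ) (⨍ t in ball z (2 ^ (j + 1) * r), f t ∂μ) ≤
        2 ^ finrank ℝ E * N := fun {j} _ => by
    simpa only [pow_succ', mul_assoc] using
      hf.edist_average_two_mul_le z (r := 2 ^ j * r) (by positivity)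
  simpa using edist_le_range_sum_of_edist_le k hstep

theorem lintegral_two_pow_mul_ball_le (hf : HasBMOBound μ f N) (z : E) {r : ℝ} (hr : 0 < r)
    (k : ℕ) :
    ∫⁻ t in ball z (2 ^ k * r), ‖f t - ⨍ u in ball z r, f u ∂μ‖ₑ ∂μ ≤
      (k + 1) * 2 ^ finrank ℝ E * N * μ (ball z (2 ^ k * r)) := by
  set c := ⨍ u in ball z r, f u ∂μ
  set c' := ⨍ u in ball z (2 ^ k * r), f u ∂μ
  set V := μ (ball z (2 ^ k * r))
  have hone : (1 : ℝ≥0∞) ≤ 2 ^ finrank ℝ E := one_le_pow₀ one_le_two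
  calc ∫⁻ t in ball z (2 ^ k * r), ‖f t - c‖ₑ ∂μ
      ≤ ∫⁻ t in ball z (2 ^ k * r), (‖f t - c'‖ₑ + edist c' c) ∂μ := by
        refine lintegral_mono fun t => ?_
        simpa only [edist_eq_enorm_sub, edist_comm c c'] using edist_triangle (f t) c' c
    _ = ∫⁻ t in ball z (2 ^ k * r), ‖f t - c'‖ₑ ∂μ + edist c' c * V := by
        rw [lintegral_add_right _ measurable_const, setLIntegral_const]
    _ ≤ N * V + k * (2 ^ finrank ℝ E * N) * V := by
        gcongr
        · exact hf.lintegral_enorm_sub_average_le z (by positivity)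
        · exact (edist_comm c' c).trans_le (hf.edist_average_two_pow_mul_le z hr k)
    _ ≤ 2 ^ finrank ℝ E * N * V + k * (2 ^ finrank ℝ E * N) * V := by
        gcongr
        exact le_mul_of_one_le_left' hone
    _ = (k + 1) * 2 ^ finrank ℝ E * N * V := by ring

theorem lintegral_annulus_div_pow_le (hf : HasBMOBound μ f N) (z : E) {R : ℝ} (hR : 0 < R)
    (k : ℕ) :
    ∫⁻ t in ball z (2 ^ (k + 1) * R) \ ball z (2 ^ k * R),
        ‖f t - ⨍ u in ball z R, f u ∂μ‖ₑ / ‖t - z‖ₑ ^ (finrank ℝ E + 1) ∂μ ≤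
      (k + 2) * 2⁻¹ ^ k * (4 ^ finrank ℝ E * μ (ball 0 1) * N / ENNReal.ofReal R) := by
  set c := ⨍ u in ball z R, f u ∂μ
  set n := finrank ℝ E
  have hscale (m : ℕ) : 0 < 2 ^ m * R := by positivity
  have hweight : ENNReal.ofReal (2 ^ k * R) ^ (n + 1) ≠ 0 := by simp [hR]
  calc ∫⁻ t in ball z (2 ^ (k + 1) * R) \ ball z (2 ^ k * R),
        ‖f t - c‖ₑ / ‖t - z‖ₑ ^ (n + 1) ∂μ
      ≤ ∫⁻ t in ball z (2 ^ (k + 1) * R) \ ball z (2 ^ k * R),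
          ‖f t - c‖ₑ / ENNReal.ofReal (2 ^ k * R) ^ (n + 1) ∂μ := by
        refine setLIntegral_mono' (measurableSet_ball.diff measurableSet_ball) fun t ht => ?_
        have hkt : 2 ^ k * R ≤ ‖t - z‖ := by simpa [dist_eq_norm] using ht.2
        rw [← ofReal_norm (t - z)]
        gcongr
    _ ≤ (∫⁻ t in ball z (2 ^ (k + 1) * R), ‖f t - c‖ₑ ∂μ) /
          ENNReal.ofReal (2 ^ k * R) ^ (n + 1) := by
        simp only [div_eq_mul_inv]
        rw [lintegral_mul_const' _ _ (ENNReal.inv_ne_top.2 hweight)]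
        gcongr
        exact Set.sdiff_subset
    _ ≤ ((k + 1 : ℕ) + 1) * 2 ^ n * N * μ (ball z (2 ^ (k + 1) * R)) /
          ENNReal.ofReal (2 ^ k * R) ^ (n + 1) := by
        gcongr
        exact hf.lintegral_two_pow_mul_ball_le z hR (k + 1)
    _ = (k + 2) * 2 ^ n * N * μ (ball 0 1) *
          (ENNReal.ofReal (2 ^ (k + 1) * R) ^ n / ENNReal.ofReal (2 ^ k * R) ^ (n + 1)) := by
        rw [Measure.addHaar_ball_of_pos μ z (hscale (k + 1)), ENNReal.ofReal_pow (hscale _).le]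
        push_cast
        simp only [div_eq_mul_inv, add_assoc, one_add_one_eq_two]
        ring
    _ = (k + 2) * 2⁻¹ ^ k * (4 ^ n * μ (ball 0 1) * N / ENNReal.ofReal R) := by
        rw [ofReal_dyadic_pow_div hR k n, show (4 : ℝ≥0∞) = 2 * 2 by norm_num, mul_pow]
        simp only [div_eq_mul_inv]
        ring

theorem lintegral_compl_ball_div_pow_le (hf : HasBMOBound μ f N) (z : E) {R : ℝ} (hR : 0 < R) :
    ∫⁻ t in (ball z R)ᶜ,
        ‖f t - ⨍ u in ball z R, f u ∂μ‖ₑ / ‖t - z‖ₑ ^ (finrank ℝ E + 1) ∂μ ≤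
      6 * (4 ^ finrank ℝ E * μ (ball 0 1) * N / ENNReal.ofReal R) := by
  calc ∫⁻ t in (ball z R)ᶜ,
        ‖f t - ⨍ u in ball z R, f u ∂μ‖ₑ / ‖t - z‖ₑ ^ (finrank ℝ E + 1) ∂μ
      ≤ ∑' k : ℕ, ∫⁻ t in ball z (2 ^ (k + 1) * R) \ ball z (2 ^ k * R),
          ‖f t - ⨍ u in ball z R, f u ∂μ‖ₑ / ‖t - z‖ₑ ^ (finrank ℝ E + 1) ∂μ :=
        (lintegral_mono_set (compl_ball_subset_iUnion_sdiff z hR)).trans (lintegral_iUnion_le _ _)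
    _ ≤ ∑' k : ℕ, (k + 2) * 2⁻¹ ^ k * (4 ^ finrank ℝ E * μ (ball 0 1) * N / ENNReal.ofReal R) :=
        ENNReal.tsum_le_tsum fun k => hf.lintegral_annulus_div_pow_le z hR k
    _ = 6 * (4 ^ finrank ℝ E * μ (ball 0 1) * N / ENNReal.ofReal R) := by
        rw [ENNReal.tsum_mul_right, tsum_add_two_mul_inv_two_pow]

end HasBMOBound

end MeanOscillation

section Dilation

open Module Set
open ContinuousLinearMap (lsmul)
open scoped Convolution ENNReal FourierTransform SchwartzMap

/-- The `L¹`-normalised dilation `Φ_ε(s) = ε⁻ⁿ Φ(s / ε)` on a space of dimension `n`. -/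
def dilate {E V : Type*} [NormedAddCommGroup E] [NormedSpace ℝ E] [NormedAddCommGroup V]
    [NormedSpace ℝ V] (Φ : E → V) (ε : ℝ) (s : E) : V :=
  (ε ^ finrank ℝ E)⁻¹ • Φ (ε⁻¹ • s)

variable {E F : Type*} [NormedAddCommGroup E] [NormedAddCommGroup F]

section NormedSpace

variable [NormedSpace ℝ E]

theorem exists_schwartzMap_coe_eq_dilate [NormedSpace ℝ F] (Φ : 𝓢(E, F)) {ε : ℝ} (hε : 0 < ε) :
    ∃ Ψ : 𝓢(E, F), ⇑Ψ = dilate Φ ε :=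
  ⟨(ε ^ finrank ℝ E)⁻¹ • SchwartzMap.compCLMOfContinuousLinearEquiv ℝ
    (ContinuousLinearEquiv.smulLeft (Units.mk0 ε⁻¹ (inv_ne_zero hε.ne')) : E ≃L[ℝ] E) Φ,
    funext fun _ => by simp [dilate]⟩

theorem norm_pow_mul_norm_dilate_le [NormedSpace ℝ F] {Φ : E → F} {A : ℝ}
    (hA : ∀ x, ‖x‖ ^ (finrank ℝ E + 1) * ‖Φ x‖ ≤ A) {ε : ℝ} (hε : 0 < ε) (x : E) :
    ‖x‖ ^ (finrank ℝ E + 1) * ‖dilate Φ ε x‖ ≤ A * ε := by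
  have hx := hA (ε⁻¹ • x)
  rw [norm_smul, Real.norm_of_nonneg (by positivity), mul_pow] at hx
  rw [dilate, norm_smul, Real.norm_of_nonneg (by positivity)]
  calc ‖x‖ ^ (finrank ℝ E + 1) * ((ε ^ finrank ℝ E)⁻¹ * ‖Φ (ε⁻¹ • x)‖)
      = ε⁻¹ ^ (finrank ℝ E + 1) * ‖x‖ ^ (finrank ℝ E + 1) * ‖Φ (ε⁻¹ • x)‖ * ε := by
        rw [pow_succ ε⁻¹, inv_pow]
        field_simp
    _ ≤ A * ε := by gcongr

theorem integral_dilate [NormedSpace ℝ F] [FiniteDimensional ℝ E] [MeasurableSpace E]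
    [BorelSpace E] (μ : Measure E) [μ.IsAddHaarMeasure] (Φ : E → F) {ε : ℝ} (hε : 0 < ε) :
    ∫ s, dilate Φ ε s ∂μ = ∫ s, Φ s ∂μ := by
  simp only [dilate]
  rw [integral_smul, Measure.integral_comp_inv_smul_of_nonneg μ Φ hε.le,
    inv_smul_smul₀ (by positivity)]

end NormedSpace

section InnerProductSpace

variable [InnerProductSpace ℝ E] [FiniteDimensional ℝ E] [MeasurableSpace E] [BorelSpace E]

theorem fourier_dilate [NormedSpace ℂ F] (Φ : E → F) {ε : ℝ} (hε : 0 < ε) (ξ : E) :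
    𝓕 (dilate Φ ε) ξ = 𝓕 Φ (ε • ξ) := by
  have hphase (v : E) : 𝐞 (-inner ℝ v ξ) • dilate Φ ε v =
      (ε ^ finrank ℝ E)⁻¹ • (𝐞 (-inner ℝ (ε⁻¹ • v) (ε • ξ)) • Φ (ε⁻¹ • v)) := by
    rw [dilate, smul_comm, inner_smul_left, inner_smul_right, conj_trivial,
      inv_mul_cancel_left₀ hε.ne']
  rw [Real.fourier_eq, Real.fourier_eq]
  simp_rw [hphase]
  rw [integral_smul, Measure.integral_comp_inv_smul_of_nonneg volume
    (fun v => 𝐞 (-inner ℝ v (ε • ξ)) • Φ v) hε.le, inv_smul_smul₀ (by positivity)]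

/-- The extension `(s, ε) ↦ (Φ_ε * f)(s)` of `f` to the upper half-space. -/
def convDilate [NormedSpace ℂ F] (Φ : E → ℂ) (f : E → F) (p : E × ℝ) : F :=
  (dilate Φ p.2 ⋆[lsmul ℂ ℂ] f) p.1

theorem stronglyMeasurable_convDilate [NormedSpace ℂ F] {Φ : E → ℂ} (hΦ : Continuous Φ)
    {f : E → F} (hf : AEStronglyMeasurable f) : StronglyMeasurable (convDilate Φ f) := by
  have hmk : convDilate Φ f = fun p : E × ℝ => ∫ t, dilate Φ p.2 (p.1 - t) • hf.mk f t := by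
    ext p
    rw [convDilate, convolution_lsmul_swap]
    refine integral_congr_ae (hf.ae_eq_mk.mono fun t ht => ?_)
    simp only [ht]
  have hkernel : Measurable fun q : (E × ℝ) × E => dilate Φ q.1.2 (q.1.1 - q.2) := by
    have : Measurable fun q : (E × ℝ) × E => Φ (q.1.2⁻¹ • (q.1.1 - q.2)) :=
      hΦ.measurable.comp (by fun_prop)
    unfold dilate
    fun_prop
  rw [hmk]
  exact (hkernel.stronglyMeasurable.smul
    (hf.stronglyMeasurable_mk.comp_measurable measurable_snd)).integral_prod_right

variable [InnerProductSpace ℂ F] [CompleteSpace F]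

theorem eLpNorm_fourier_two (g : 𝓢(E, F)) :
    eLpNorm (𝓕 g : 𝓢(E, F)) 2 volume = eLpNorm g 2 volume := by
  rw [← ENNReal.toReal_eq_toReal_iff' ((𝓕 g).memLp 2 volume).2.ne (g.memLp 2 volume).2.ne]
  simpa only [SchwartzMap.norm_toLp] using SchwartzMap.norm_fourier_toL2_eq g

theorem lintegral_enorm_sq_convDilate (Φ : 𝓢(E, ℂ)) (g : 𝓢(E, F)) {ε : ℝ} (hε : 0 < ε) :
    ∫⁻ s, ‖convDilate Φ g (s, ε)‖ₑ ^ 2 = ∫⁻ ξ, ‖𝓕 Φ (ε • ξ)‖ₑ ^ 2 * ‖𝓕 g ξ‖ₑ ^ 2 := by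
  obtain ⟨Ψ, hΨ⟩ := exists_schwartzMap_coe_eq_dilate Φ hε
  have hconv (s : E) : convDilate Φ g (s, ε) = SchwartzMap.convolution (lsmul ℂ ℂ) Ψ g s := by
    rw [SchwartzMap.convolution_apply, hΨ, convDilate]
  have hfourier (ξ : E) :
      𝓕 (SchwartzMap.convolution (lsmul ℂ ℂ) Ψ g) ξ = 𝓕 Φ (ε • ξ) • 𝓕 g ξ := by
    rw [SchwartzMap.fourier_convolution, SchwartzMap.pairing_apply_apply,
      SchwartzMap.fourier_coe Ψ, hΨ, fourier_dilate _ hε, SchwartzMap.fourier_coe Φ]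
    rfl
  simp_rw [hconv]
  rw [lintegral_enorm_sq, ← eLpNorm_fourier_two, ← lintegral_enorm_sq]
  simp_rw [hfourier, enorm_smul, mul_pow]

end InnerProductSpace

end Dilation

section SquareFunction

open Filter Module Set
open ContinuousLinearMap (lsmul)
open scoped Convolution ENNReal FourierTransform NNReal SchwartzMap Topology

/-- The dilation-invariant measure `dε / ε` on the half-line `(0, ∞)`. -/
def scaleMeasure : Measure ℝ :=
  (volume.restrict (Ioi 0)).withDensity fun ε => ENNReal.ofReal ε⁻¹

instance : SFinite scaleMeasure := by unfold scaleMeasure; infer_instance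

theorem lintegral_scaleMeasure (u : ℝ → ℝ≥0∞) :
    ∫⁻ ε, u ε ∂scaleMeasure = ∫⁻ ε in Ioi 0, ENNReal.ofReal ε⁻¹ * u ε :=
  lintegral_withDensity_eq_lintegral_mul_non_measurable _ (by fun_prop)
    (Eventually.of_forall fun _ => ENNReal.ofReal_lt_top) u

theorem setLIntegral_Ioc_scaleMeasure (r : ℝ) (u : ℝ → ℝ≥0∞) :
    ∫⁻ ε in Ioc 0 r, u ε ∂scaleMeasure = ∫⁻ ε in Ioc 0 r, ENNReal.ofReal ε⁻¹ * u ε := by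
  rw [scaleMeasure, setLIntegral_withDensity_eq_setLIntegral_mul_non_measurable _ (by fun_prop) _
      measurableSet_Ioc (ae_of_all _ fun _ => ENNReal.ofReal_lt_top),
    Measure.restrict_restrict measurableSet_Ioc, inter_eq_left.2 Ioc_subset_Ioi_self]
  rfl

theorem ae_scaleMeasure_pos : ∀ᵐ ε ∂scaleMeasure, 0 < ε :=
  withDensity_absolutelyContinuous _ _ (ae_restrict_mem measurableSet_Ioi)

theorem lintegral_mul_sq_div_one_add_sq_le (a : ℝ) :
    ∫⁻ ε in Ioi (0 : ℝ), ENNReal.ofReal (ε * a ^ 2 / (1 + ε ^ 2 * a ^ 2) ^ 2) ≤ 1 := by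
  rcases eq_or_ne a 0 with rfl | ha
  · simp
  have hderiv : ∀ ε ∈ Ici (0 : ℝ), HasDerivAt (fun ε : ℝ => -(1 / 2) * (1 + ε ^ 2 * a ^ 2)⁻¹)
      (ε * a ^ 2 / (1 + ε ^ 2 * a ^ 2) ^ 2) ε := fun ε _ => by
    have hden : HasDerivAt (fun ε : ℝ => 1 + ε ^ 2 * a ^ 2) (2 * ε * a ^ 2) ε := by
      simpa using ((hasDerivAt_pow 2 ε).mul_const (a ^ 2)).const_add 1
    exact ((hden.fun_inv (by positivity)).const_mul _).congr_deriv (by ring)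
  have hlim : Tendsto (fun ε : ℝ => -(1 / 2) * (1 + ε ^ 2 * a ^ 2)⁻¹) atTop (𝓝 0) := by
    have hden : Tendsto (fun ε : ℝ => 1 + ε ^ 2 * a ^ 2) atTop atTop :=
      tendsto_atTop_add_const_left _ _
        ((tendsto_pow_atTop two_ne_zero).atTop_mul_const (by positivity))
    simpa using (tendsto_inv_atTop_zero.comp hden).const_mul (-(1 / 2) : ℝ)
  have hnonneg : ∀ ε ∈ Ioi (0 : ℝ), 0 ≤ ε * a ^ 2 / (1 + ε ^ 2 * a ^ 2) ^ 2 := fun ε hε =>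
    div_nonneg (mul_nonneg (le_of_lt hε) (sq_nonneg a)) (sq_nonneg _)
  rw [← ofReal_integral_eq_lintegral_ofReal (integrableOn_Ioi_deriv_of_nonneg' hderiv hnonneg hlim)
      (ae_restrict_of_forall_mem measurableSet_Ioi hnonneg),
    integral_Ioi_of_hasDerivAt_of_nonneg' hderiv hnonneg hlim]
  norm_num

theorem exists_norm_mul_one_add_sq_le {E V : Type*} [NormedAddCommGroup E] [NormedSpace ℝ E]
    [NormedAddCommGroup V] [NormedSpace ℝ V] (g : 𝓢(E, V)) (hg : g 0 = 0) :
    ∃ K : ℝ, 0 ≤ K ∧ ∀ η, ‖g η‖ * (1 + ‖η‖ ^ 2) ≤ K * ‖η‖ := by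
  set A := SchwartzMap.seminorm ℝ 0 1 g
  set B := SchwartzMap.seminorm ℝ 1 0 g
  refine ⟨A + B, by positivity, fun η => ?_⟩
  have hderiv (x : E) : ‖fderiv ℝ g x‖ ≤ A := by
    simpa [norm_iteratedFDeriv_one] using SchwartzMap.le_seminorm ℝ 0 1 g x
  have hsmall : ‖g η‖ ≤ A * ‖η‖ := by
    simpa [hg] using convex_univ.norm_image_sub_le_of_norm_fderiv_le (𝕜 := ℝ) (x := 0)
      (fun x _ => g.differentiableAt) (fun x _ => hderiv x) (mem_univ _) (mem_univ η)
  have hlarge : ‖η‖ * ‖g η‖ ≤ B := by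
    simpa using SchwartzMap.norm_pow_mul_le_seminorm ℝ g 1 η
  nlinarith [mul_le_mul_of_nonneg_right hlarge (norm_nonneg η)]

theorem exists_lintegral_enorm_sq_smul_scaleMeasure_le {E V : Type*} [NormedAddCommGroup E]
    [NormedSpace ℝ E] [NormedAddCommGroup V] [NormedSpace ℝ V] (g : 𝓢(E, V)) (hg : g 0 = 0) :
    ∃ K : ℝ≥0, ∀ ξ, ∫⁻ ε, ‖g (ε • ξ)‖ₑ ^ 2 ∂scaleMeasure ≤ K ^ 2 := by
  obtain ⟨K, hK, hbound⟩ := exists_norm_mul_one_add_sq_le g hg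
  refine ⟨K.toNNReal, fun ξ => ?_⟩
  have hpointwise (ε : ℝ) (hε : 0 < ε) :
      ε⁻¹ * ‖g (ε • ξ)‖ ^ 2 ≤ K ^ 2 * (ε * ‖ξ‖ ^ 2 / (1 + ε ^ 2 * ‖ξ‖ ^ 2) ^ 2) := by
    have h := hbound (ε • ξ)
    rw [norm_smul, Real.norm_of_nonneg hε.le, mul_pow, ← le_div_iff₀ (by positivity)] at h
    calc ε⁻¹ * ‖g (ε • ξ)‖ ^ 2
        ≤ ε⁻¹ * (K * (ε * ‖ξ‖) / (1 + ε ^ 2 * ‖ξ‖ ^ 2)) ^ 2 := by gcongr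
      _ = K ^ 2 * (ε * ‖ξ‖ ^ 2 / (1 + ε ^ 2 * ‖ξ‖ ^ 2) ^ 2) := by field_simp
  calc ∫⁻ ε, ‖g (ε • ξ)‖ₑ ^ 2 ∂scaleMeasure
      = ∫⁻ ε in Ioi 0, ENNReal.ofReal ε⁻¹ * ‖g (ε • ξ)‖ₑ ^ 2 := lintegral_scaleMeasure _
    _ ≤ ∫⁻ ε in Ioi 0, ENNReal.ofReal (K ^ 2) *
          ENNReal.ofReal (ε * ‖ξ‖ ^ 2 / (1 + ε ^ 2 * ‖ξ‖ ^ 2) ^ 2) := by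
        refine setLIntegral_mono' measurableSet_Ioi fun ε hε => ?_
        rw [← ofReal_norm, ← ENNReal.ofReal_pow (norm_nonneg _),
          ← ENNReal.ofReal_mul (inv_nonneg.2 (le_of_lt hε)), ← ENNReal.ofReal_mul (sq_nonneg K)]
        exact ENNReal.ofReal_le_ofReal (hpointwise ε hε)
    _ ≤ K.toNNReal ^ 2 := by
        rw [lintegral_const_mul' _ _ ENNReal.ofReal_ne_top, ENNReal.ofReal_pow hK]
        exact mul_le_of_le_one_right' (lintegral_mul_sq_div_one_add_sq_le ‖ξ‖)

variable {E F : Type*} [NormedAddCommGroup E] [InnerProductSpace ℝ E] [FiniteDimensional ℝ E]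
  [MeasurableSpace E] [BorelSpace E] [NormedAddCommGroup F]

theorem tendsto_convolution_lsmul [NormedSpace ℂ F] {k : E → ℂ} (hk : MemLp k 2) {f : E → F}
    (hf : MemLp f 2) {g : ℕ → E → F} (hg : ∀ n, MemLp (g n) 2)
    (hgf : Tendsto (fun n => eLpNorm (g n - f) 2 volume) atTop (𝓝 0)) (s : E) :
    Tendsto (fun n => (k ⋆[lsmul ℂ ℂ] g n) s) atTop (𝓝 ((k ⋆[lsmul ℂ ℂ] f) s)) := by
  have hks : MemLp (fun t => k (s - t)) 2 :=
    hk.comp_measurePreserving (Measure.measurePreserving_sub_left volume s)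
  have hint {h : E → F} (hh : MemLp h 2) : Integrable (fun t => k (s - t) • h t) :=
    memLp_one_iff_integrable.1 (hh.smul hks)
  have hholder (n : ℕ) : eLpNorm (fun t => k (s - t) • g n t - k (s - t) • f t) 1 ≤
      eLpNorm (fun t => k (s - t)) 2 volume * eLpNorm (g n - f) 2 volume := by
    simp_rw [← smul_sub]
    exact eLpNorm_smul_le_mul_eLpNorm ((hg n).sub hf).aestronglyMeasurable
      hks.aestronglyMeasurable
  have hlim : Tendsto (fun n => eLpNorm (fun t => k (s - t)) 2 volume * eLpNorm (g n - f) 2 volume)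
      atTop (𝓝 0) := by
    simpa using ENNReal.Tendsto.const_mul hgf (Or.inr hks.eLpNorm_ne_top)
  simp only [convolution_lsmul_swap]
  exact tendsto_integral_of_L1' _ (hint hf).aestronglyMeasurable
    (Eventually.of_forall fun n => hint (hg n))
    (tendsto_of_tendsto_of_tendsto_of_le_of_le tendsto_const_nhds hlim (fun _ => zero_le) hholder)

variable [InnerProductSpace ℂ F] [CompleteSpace F]

theorem eLpNorm_convDilate_le_of_schwartz {Φ : 𝓢(E, ℂ)} {K : ℝ≥0}
    (hΦ : ∀ ξ, ∫⁻ ε, ‖𝓕 Φ (ε • ξ)‖ₑ ^ 2 ∂scaleMeasure ≤ K ^ 2) (g : 𝓢(E, F)) :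
    eLpNorm (convDilate Φ g) 2 (volume.prod scaleMeasure) ≤ K * eLpNorm g 2 volume := by
  have hmeas : AEMeasurable (fun p => ‖convDilate Φ g p‖ₑ ^ 2) (volume.prod scaleMeasure) :=
    ((stronglyMeasurable_convDilate Φ.continuous
      g.continuous.aestronglyMeasurable).enorm.pow_const 2).aemeasurable
  have hkernel : Continuous fun q : ℝ × E => 𝓕 Φ (q.1 • q.2) :=
    (𝓕 Φ).continuous.comp continuous_smul
  have hswap : AEMeasurable (fun q : ℝ × E => ‖𝓕 Φ (q.1 • q.2)‖ₑ ^ 2 * ‖𝓕 g q.2‖ₑ ^ 2)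
      (scaleMeasure.prod volume) :=
    ((hkernel.enorm.measurable.pow_const 2).mul
      (((𝓕 g).continuous.enorm.measurable.comp measurable_snd).pow_const 2)).aemeasurable
  rw [← ENNReal.pow_le_pow_left_iff two_ne_zero, ← lintegral_enorm_sq, mul_pow]
  calc ∫⁻ p, ‖convDilate Φ g p‖ₑ ^ 2 ∂(volume.prod scaleMeasure)
      = ∫⁻ ε, (∫⁻ s, ‖convDilate Φ g (s, ε)‖ₑ ^ 2) ∂scaleMeasure := lintegral_prod_symm _ hmeas
    _ = ∫⁻ ε, (∫⁻ ξ, ‖𝓕 Φ (ε • ξ)‖ₑ ^ 2 * ‖𝓕 g ξ‖ₑ ^ 2) ∂scaleMeasure :=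
        lintegral_congr_ae (ae_scaleMeasure_pos.mono fun ε hε =>
          lintegral_enorm_sq_convDilate Φ g hε)
    _ = ∫⁻ ξ, ∫⁻ ε, ‖𝓕 Φ (ε • ξ)‖ₑ ^ 2 * ‖𝓕 g ξ‖ₑ ^ 2 ∂scaleMeasure :=
        lintegral_lintegral_swap hswap
    _ ≤ ∫⁻ ξ, K ^ 2 * ‖𝓕 g ξ‖ₑ ^ 2 := by
        refine lintegral_mono fun ξ => ?_
        rw [lintegral_mul_const' _ _ (by finiteness)]
        gcongr
        exact hΦ ξ
    _ = K ^ 2 * eLpNorm g 2 volume ^ 2 := by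
        rw [lintegral_const_mul' _ _ (by finiteness), lintegral_enorm_sq, eLpNorm_fourier_two]

theorem eLpNorm_convDilate_le {Φ : 𝓢(E, ℂ)} {K : ℝ≥0}
    (hΦ : ∀ ξ, ∫⁻ ε, ‖𝓕 Φ (ε • ξ)‖ₑ ^ 2 ∂scaleMeasure ≤ K ^ 2) {f : E → F} (hf : MemLp f 2) :
    eLpNorm (convDilate Φ f) 2 (volume.prod scaleMeasure) ≤ K * eLpNorm f 2 volume := by
  obtain ⟨u, hu, hlim⟩ := mem_closure_iff_seq_limit.1
    (SchwartzMap.denseRange_toLpCLM (F := F) (μ := (volume : Measure E)) ENNReal.ofNat_ne_top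
      (hf.toLp f))
  choose g hg using hu
  have hgf : Tendsto (fun n => eLpNorm (⇑(g n) - f) 2 volume) atTop (𝓝 0) := by
    refine ((Lp.tendsto_Lp_iff_tendsto_eLpNorm' _ _).1 hlim).congr fun n => eLpNorm_congr_ae ?_
    rw [← hg n]
    exact ((g n).coeFn_toLp 2 volume).sub hf.coeFn_toLp
  have hpointwise : ∀ᵐ p ∂(volume : Measure E).prod scaleMeasure,
      Tendsto (fun n => convDilate Φ (g n) p) atTop (𝓝 (convDilate Φ f p)) := by
    filter_upwards [Measure.quasiMeasurePreserving_snd.ae ae_scaleMeasure_pos] with p hp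
    obtain ⟨Ψ, hΨ⟩ := exists_schwartzMap_coe_eq_dilate Φ hp
    exact tendsto_convolution_lsmul (hΨ ▸ Ψ.memLp 2 volume) hf (fun n => (g n).memLp 2 volume)
      hgf p.1
  have hnorm : Tendsto (fun n => K * eLpNorm (g n) 2 volume) atTop
      (𝓝 (K * eLpNorm f 2 volume)) := by
    refine ENNReal.Tendsto.const_mul ?_ (Or.inr ENNReal.coe_ne_top)
    rw [← Lp.enorm_toLp hf]
    refine hlim.enorm.congr fun n => ?_
    rw [← hg n]
    exact Lp.enorm_toLp ((g n).memLp 2 volume)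
  calc eLpNorm (convDilate Φ f) 2 (volume.prod scaleMeasure)
      ≤ liminf (fun n => eLpNorm (convDilate Φ (g n)) 2 (volume.prod scaleMeasure)) atTop :=
        Lp.eLpNorm_lim_le_liminf_eLpNorm (fun n => (stronglyMeasurable_convDilate Φ.continuous
          (g n).continuous.aestronglyMeasurable).aestronglyMeasurable) _ hpointwise
    _ ≤ liminf (fun n => K * eLpNorm (g n) 2 volume) atTop :=
        liminf_le_liminf (Eventually.of_forall fun n => eLpNorm_convDilate_le_of_schwartz hΦ (g n))
    _ = K * eLpNorm f 2 volume := hnorm.liminf_eq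

end SquareFunction

section Carleson

open Metric Module Set
open ContinuousLinearMap (lsmul)
open scoped Convolution ENNReal FourierTransform NNReal SchwartzMap

theorem ennreal_add_sq_le (a b : ℝ≥0∞) : (a + b) ^ 2 ≤ 2 * (a ^ 2 + b ^ 2) := by
  have h := ENNReal.rpow_add_le_mul_rpow_add_rpow a b one_le_two
  norm_num at h
  exact h

theorem enorm_convolution_lsmul_le {G F : Type*} [AddCommGroup G] [MeasurableSpace G]
    [MeasurableAdd G] [MeasurableNeg G] {μ : Measure G} [μ.IsAddLeftInvariant] [μ.IsNegInvariant]
    [NormedAddCommGroup F] [NormedSpace ℂ F] [CompleteSpace F] {k : G → ℂ} (hk : Integrable k μ)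
    (hk0 : ∫ t, k t ∂μ = 0) (f : G → F) (c : F) {U : Set G} (hU : MeasurableSet U) (s : G) :
    ‖(k ⋆[lsmul ℂ ℂ, μ] f) s‖ₑ ≤ ‖(k ⋆[lsmul ℂ ℂ, μ] U.indicator fun t => f t - c) s‖ₑ +
      ∫⁻ t in Uᶜ, ‖k (s - t)‖ₑ * ‖f t - c‖ₑ ∂μ := by
  simp only [convolution_lsmul_swap]
  by_cases hkf : Integrable (fun t => k (s - t) • f t) μ
  swap
  · simp [integral_undef hkf]
  have hkc : Integrable (fun t => k (s - t) • c) μ := (hk.comp_sub_left s).smul_const c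
  have hsub : Integrable (fun t => k (s - t) • (f t - c)) μ := by
    simp_rw [smul_sub]
    exact hkf.sub hkc
  have hcancel : ∫ t, k (s - t) • f t ∂μ = ∫ t, k (s - t) • (f t - c) ∂μ := by
    simp_rw [smul_sub]
    rw [integral_sub hkf hkc, integral_smul_const, integral_sub_left_eq_self k μ s, hk0, zero_smul,
      sub_zero]
  have hlocal : ∫ t, k (s - t) • U.indicator (fun t => f t - c) t ∂μ =
      ∫ t in U, k (s - t) • (f t - c) ∂μ := by
    rw [← integral_indicator hU]
    simp_rw [indicator_smul_apply]
  rw [hcancel, hlocal, ← integral_add_compl hU hsub]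
  refine (enorm_add_le _ _).trans (add_le_add_right ?_ _)
  simpa only [enorm_smul] using enorm_integral_le_lintegral_enorm fun t => k (s - t) • (f t - c)

section NormedSpace

variable {E V : Type*} [NormedAddCommGroup E] [NormedSpace ℝ E] [NormedAddCommGroup V]
  [NormedSpace ℝ V]

theorem enorm_dilate_sub_le {Φ : E → V} {A : ℝ≥0} (hA : ∀ x, ‖x‖ ^ (finrank ℝ E + 1) * ‖Φ x‖ ≤ A)
    {z s t : E} {r ε : ℝ} (hε : 0 < ε) (hs : s ∈ ball z r) (ht : t ∈ (ball z (2 * r))ᶜ) :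
    ‖dilate Φ ε (s - t)‖ₑ ≤
      2 ^ (finrank ℝ E + 1) * A * ENNReal.ofReal ε / ‖t - z‖ₑ ^ (finrank ℝ E + 1) := by
  have hsz : dist s z < r := hs
  have htz : 2 * r ≤ dist t z := by simpa using ht
  have hst : ‖t - z‖ ≤ 2 * ‖s - t‖ := by
    rw [← dist_eq_norm, ← dist_eq_norm]
    linarith [dist_triangle_left t z s]
  have hpos : 0 < ‖t - z‖ := by
    rw [← dist_eq_norm]
    linarith [dist_nonneg (x := s) (y := z)]
  have hreal : ‖dilate Φ ε (s - t)‖ ≤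
      2 ^ (finrank ℝ E + 1) * A * ε / ‖t - z‖ ^ (finrank ℝ E + 1) := by
    rw [le_div_iff₀ (by positivity)]
    calc ‖dilate Φ ε (s - t)‖ * ‖t - z‖ ^ (finrank ℝ E + 1)
        ≤ ‖dilate Φ ε (s - t)‖ * (2 * ‖s - t‖) ^ (finrank ℝ E + 1) := by gcongr
      _ = 2 ^ (finrank ℝ E + 1) * (‖s - t‖ ^ (finrank ℝ E + 1) * ‖dilate Φ ε (s - t)‖) := by ring
      _ ≤ 2 ^ (finrank ℝ E + 1) * (A * ε) :=
        mul_le_mul_of_nonneg_left (norm_pow_mul_norm_dilate_le hA hε (s - t)) (by positivity)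
      _ = 2 ^ (finrank ℝ E + 1) * A * ε := by ring
  rw [← ofReal_norm, ← ofReal_norm, ← ENNReal.ofReal_pow hpos.le, ← ENNReal.ofReal_coe_nnreal,
    ← ENNReal.ofReal_ofNat, ← ENNReal.ofReal_pow zero_le_two, ← ENNReal.ofReal_mul (by positivity),
    ← ENNReal.ofReal_mul (by positivity), ← ENNReal.ofReal_div_of_pos (by positivity)]
  exact ENNReal.ofReal_le_ofReal hreal

theorem HasBMOBound.lintegral_compl_ball_enorm_dilate_mul_le {F : Type*} [NormedAddCommGroup F]
    [NormedSpace ℝ F] [CompleteSpace F] [FiniteDimensional ℝ E] [MeasurableSpace E] [BorelSpace E]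
    {μ : Measure E} [μ.IsAddHaarMeasure] {f : E → F} {N : ℝ≥0} (hf : HasBMOBound μ f N)
    {Φ : E → V} {A : ℝ≥0} (hA : ∀ x, ‖x‖ ^ (finrank ℝ E + 1) * ‖Φ x‖ ≤ A) {z s : E} {r ε : ℝ}
    (hr : 0 < r) (hε : 0 < ε) (hs : s ∈ ball z r) :
    ∫⁻ t in (ball z (2 * r))ᶜ,
        ‖dilate Φ ε (s - t)‖ₑ * ‖f t - ⨍ u in ball z (2 * r), f u ∂μ‖ₑ ∂μ ≤
      6 * 8 ^ finrank ℝ E * A * μ (ball 0 1) * N * ENNReal.ofReal (ε / r) := by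
  set n := finrank ℝ E
  set c := ⨍ u in ball z (2 * r), f u ∂μ
  calc ∫⁻ t in (ball z (2 * r))ᶜ, ‖dilate Φ ε (s - t)‖ₑ * ‖f t - c‖ₑ ∂μ
      ≤ ∫⁻ t in (ball z (2 * r))ᶜ, 2 ^ (n + 1) * A * ENNReal.ofReal ε *
          (‖f t - c‖ₑ / ‖t - z‖ₑ ^ (n + 1)) ∂μ := by
        refine setLIntegral_mono' measurableSet_ball.compl fun t ht => ?_
        rw [mul_comm, ← mul_div_assoc, mul_comm _ ‖f t - c‖ₑ, mul_div_assoc]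
        gcongr
        exact enorm_dilate_sub_le hA hε hs ht
    _ ≤ 2 ^ (n + 1) * A * ENNReal.ofReal ε *
          (6 * (4 ^ n * μ (ball 0 1) * N / ENNReal.ofReal (2 * r))) := by
        rw [lintegral_const_mul' _ _ (by finiteness)]
        gcongr
        exact hf.lintegral_compl_ball_div_pow_le z (by positivity)
    _ = 2 * 2⁻¹ * (6 * 8 ^ n * A * μ (ball 0 1) * N * ENNReal.ofReal (ε / r)) := by
        rw [ENNReal.ofReal_div_of_pos hr, ENNReal.ofReal_mul zero_le_two, ENNReal.ofReal_ofNat,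
          show (8 : ℝ≥0∞) = 2 * 4 by norm_num]
        simp only [div_eq_mul_inv, mul_pow, pow_succ,
          ENNReal.mul_inv (Or.inl two_ne_zero) (Or.inl ENNReal.ofNat_ne_top)]
        ring
    _ = 6 * 8 ^ n * A * μ (ball 0 1) * N * ENNReal.ofReal (ε / r) := by
        rw [ENNReal.mul_inv_cancel two_ne_zero ENNReal.ofNat_ne_top, one_mul]

end NormedSpace

theorem setLIntegral_Ioc_ofReal_div_sq_scaleMeasure_le {r : ℝ} (hr : 0 < r) :
    ∫⁻ ε in Ioc 0 r, ENNReal.ofReal (ε / r) ^ 2 ∂scaleMeasure ≤ 1 := by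
  rw [setLIntegral_Ioc_scaleMeasure]
  calc ∫⁻ ε in Ioc 0 r, ENNReal.ofReal ε⁻¹ * ENNReal.ofReal (ε / r) ^ 2
      ≤ ∫⁻ _ in Ioc 0 r, ENNReal.ofReal r⁻¹ := by
        refine setLIntegral_mono' measurableSet_Ioc fun ε ⟨hε, hεr⟩ => ?_
        rw [← ENNReal.ofReal_pow (by positivity), ← ENNReal.ofReal_mul (by positivity)]
        refine ENNReal.ofReal_le_ofReal ?_
        calc ε⁻¹ * (ε / r) ^ 2 = ε / r * r⁻¹ := by field_simp
          _ ≤ r⁻¹ := mul_le_of_le_one_left (by positivity) ((div_le_one hr).2 hεr)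
    _ = 1 := by
        rw [setLIntegral_const, Real.volume_Ioc, sub_zero, ← ENNReal.ofReal_mul (by positivity),
          inv_mul_cancel₀ hr.ne', ENNReal.ofReal_one]

variable {E F : Type*} [NormedAddCommGroup E] [InnerProductSpace ℝ E] [FiniteDimensional ℝ E]
  [MeasurableSpace E] [BorelSpace E] [NormedAddCommGroup F]

/-- `ν` is a Carleson measure on the upper half-space with constant at most `C`. The box over a
ball is taken to be the cylinder whose height is the radius. -/
def HasCarlesonBound (ν : Measure (E × ℝ)) (C : ℝ≥0) : Prop :=
  ∀ (z : E) {r : ℝ}, 0 < r → ν (ball z r ×ˢ Ioc 0 r) ≤ C * volume (ball z r)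

/-- The measure `dμ(f) = ‖Φ_ε * f(s)‖² ds dε/ε` attached to `f` on the upper half-space. -/
def squareFunctionMeasure [NormedSpace ℂ F] (Φ : E → ℂ) (f : E → F) : Measure (E × ℝ) :=
  (volume.prod scaleMeasure).withDensity fun p => ‖convDilate Φ f p‖ₑ ^ 2

theorem HasCarlesonBound.integral_le [NormedSpace ℂ F] {Φ : E → ℂ} (hΦ : Continuous Φ) {f : E → F}
    (hf : AEStronglyMeasurable f) {C : ℝ≥0}
    (h : HasCarlesonBound (squareFunctionMeasure Φ f) C) (z : E) {r : ℝ} (hr : 0 < r) :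
    ∫ s in ball z r, ∫ ε in Ioc 0 r, ‖convDilate Φ f (s, ε)‖ ^ 2 / ε ≤
      C * volume.real (ball z r) := by
  have hmeas : AEMeasurable (fun p => ‖convDilate Φ f p‖ₑ ^ 2)
      ((volume.restrict (ball z r)).prod (scaleMeasure.restrict (Ioc 0 r))) :=
    ((stronglyMeasurable_convDilate hΦ hf).enorm.pow_const 2).aemeasurable
  have henorm (s : E) : ‖∫ ε in Ioc 0 r, ‖convDilate Φ f (s, ε)‖ ^ 2 / ε‖ₑ ≤
      ∫⁻ ε in Ioc 0 r, ‖convDilate Φ f (s, ε)‖ₑ ^ 2 ∂scaleMeasure := by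
    rw [setLIntegral_Ioc_scaleMeasure]
    refine (enorm_integral_le_lintegral_enorm _).trans_eq
      (setLIntegral_congr_fun measurableSet_Ioc fun ε hε => ?_)
    simp only [div_eq_inv_mul, enorm_mul, enorm_pow, enorm_norm,
      Real.enorm_of_nonneg (inv_nonneg.2 hε.1.le)]
  refine (ENNReal.ofReal_le_ofReal_iff (by positivity)).1 ?_
  calc ENNReal.ofReal (∫ s in ball z r, ∫ ε in Ioc 0 r, ‖convDilate Φ f (s, ε)‖ ^ 2 / ε)
      ≤ ‖∫ s in ball z r, ∫ ε in Ioc 0 r, ‖convDilate Φ f (s, ε)‖ ^ 2 / ε‖ₑ :=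
        Real.ofReal_le_enorm _
    _ ≤ ∫⁻ s in ball z r, ∫⁻ ε in Ioc 0 r, ‖convDilate Φ f (s, ε)‖ₑ ^ 2 ∂scaleMeasure :=
        (enorm_integral_le_lintegral_enorm _).trans (lintegral_mono henorm)
    _ = squareFunctionMeasure Φ f (ball z r ×ˢ Ioc 0 r) := by
        rw [squareFunctionMeasure, withDensity_apply _ (measurableSet_ball.prod measurableSet_Ioc),
          ← Measure.prod_restrict, lintegral_prod _ hmeas]
    _ ≤ C * volume (ball z r) := h z hr
    _ = ENNReal.ofReal (C * volume.real (ball z r)) := by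
        rw [ENNReal.ofReal_mul C.coe_nonneg, ofReal_measureReal measure_ball_lt_top.ne,
          ENNReal.ofReal_coe_nnreal]

variable [InnerProductSpace ℂ F] [CompleteSpace F]

theorem lintegral_enorm_sq_convDilate_indicator_le {Φ : 𝓢(E, ℂ)} {K : ℝ≥0}
    (hΦ : ∀ ξ, ∫⁻ ε, ‖𝓕 Φ (ε • ξ)‖ₑ ^ 2 ∂scaleMeasure ≤ K ^ 2) {f : E → F} {N : ℝ≥0}
    (hf : HasBMOBound volume f N) (z : E) {r : ℝ} (hr : 0 < r) :
    ∫⁻ p, ‖convDilate Φ ((ball z r).indicator fun t => f t - ⨍ u in ball z r, f u) p‖ₑ ^ 2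
        ∂(volume.prod scaleMeasure) ≤
      K ^ 2 * (N ^ 2 * volume (ball z r)) := by
  have hmem : MemLp ((ball z r).indicator fun t => f t - ⨍ u in ball z r, f u) 2 volume :=
    (memLp_indicator_iff_restrict measurableSet_ball).2 (hf.memLp_sub_const z r _)
  rw [lintegral_enorm_sq]
  calc eLpNorm (convDilate Φ _) 2 (volume.prod scaleMeasure) ^ 2
      ≤ (K * eLpNorm ((ball z r).indicator fun t => f t - ⨍ u in ball z r, f u) 2 volume) ^ 2 := by
        gcongr
        exact eLpNorm_convDilate_le hΦ hmem
    _ = K ^ 2 * ∫⁻ t in ball z r, ‖f t - ⨍ u in ball z r, f u‖ₑ ^ 2 := by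
        rw [mul_pow, eLpNorm_indicator_eq_eLpNorm_restrict measurableSet_ball, lintegral_enorm_sq]
    _ ≤ K ^ 2 * (N ^ 2 * volume (ball z r)) := by
        gcongr
        exact hf.lintegral_ball_le z hr

theorem setLIntegral_box_ofReal_div_sq_le (z : E) {r : ℝ} (hr : 0 < r) :
    ∫⁻ p in ball z r ×ˢ Ioc 0 r, ENNReal.ofReal (p.2 / r) ^ 2 ∂(volume.prod scaleMeasure) ≤
      volume (ball z r) := by
  rw [← Measure.prod_restrict, lintegral_prod _ (by fun_prop)]
  calc ∫⁻ _ in ball z r, ∫⁻ ε in Ioc 0 r, ENNReal.ofReal (ε / r) ^ 2 ∂scaleMeasure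
      ≤ ∫⁻ _ in ball z r, 1 := by
        gcongr
        exact setLIntegral_Ioc_ofReal_div_sq_scaleMeasure_le hr
    _ = volume (ball z r) := setLIntegral_one _

theorem HasBMOBound.enorm_convDilate_le {Φ : 𝓢(E, ℂ)} (hΦ : ∫ s, Φ s = 0) {A : ℝ≥0}
    (hA : ∀ x, ‖x‖ ^ (finrank ℝ E + 1) * ‖Φ x‖ ≤ A) {f : E → F} {N : ℝ≥0}
    (hf : HasBMOBound volume f N) {z : E} {r : ℝ} (hr : 0 < r) {p : E × ℝ}
    (hp : p ∈ ball z r ×ˢ Ioc 0 r) :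
    ‖convDilate Φ f p‖ₑ ≤
      ‖convDilate Φ ((ball z (2 * r)).indicator fun t => f t - ⨍ u in ball z (2 * r), f u) p‖ₑ +
        6 * 8 ^ finrank ℝ E * A * volume (ball (0 : E) 1) * N * ENNReal.ofReal (p.2 / r) := by
  obtain ⟨hs, hε, -⟩ := hp
  obtain ⟨Ψ, hΨ⟩ := exists_schwartzMap_coe_eq_dilate Φ hε
  have hint : Integrable (dilate Φ p.2) volume := hΨ ▸ Ψ.integrable
  refine (enorm_convolution_lsmul_le hint ((integral_dilate volume Φ hε).trans hΦ) f
    (⨍ u in ball z (2 * r), f u) measurableSet_ball p.1).trans (add_le_add_right ?_ _)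
  exact hf.lintegral_compl_ball_enorm_dilate_mul_le hA hr hε hs

theorem HasBMOBound.hasCarlesonBound_squareFunctionMeasure {Φ : 𝓢(E, ℂ)} (hΦ : ∫ s, Φ s = 0)
    {K A : ℝ≥0} (hK : ∀ ξ, ∫⁻ ε, ‖𝓕 Φ (ε • ξ)‖ₑ ^ 2 ∂scaleMeasure ≤ K ^ 2)
    (hA : ∀ x, ‖x‖ ^ (finrank ℝ E + 1) * ‖Φ x‖ ≤ A) {f : E → F} {N : ℝ≥0}
    (hf : HasBMOBound volume f N) :
    HasCarlesonBound (squareFunctionMeasure Φ f)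
      (2 * (2 ^ finrank ℝ E * K ^ 2 +
        (6 * 8 ^ finrank ℝ E * A * (volume (ball (0 : E) 1)).toNNReal) ^ 2) * N ^ 2) := by
  intro z r hr
  set n := finrank ℝ E
  set ν : Measure (E × ℝ) := volume.prod scaleMeasure
  set f₁ : E → F := (ball z (2 * r)).indicator fun t => f t - ⨍ u in ball z (2 * r), f u
  set M : ℝ≥0∞ := 6 * 8 ^ n * A * volume (ball (0 : E) 1)
  have hbox : MeasurableSet (ball z r ×ˢ Ioc 0 r) := measurableSet_ball.prod measurableSet_Ioc
  calc squareFunctionMeasure Φ f (ball z r ×ˢ Ioc 0 r)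
      = ∫⁻ p in ball z r ×ˢ Ioc 0 r, ‖convDilate Φ f p‖ₑ ^ 2 ∂ν := withDensity_apply _ hbox
    _ ≤ ∫⁻ p in ball z r ×ˢ Ioc 0 r,
          2 * (‖convDilate Φ f₁ p‖ₑ ^ 2 + (M * N) ^ 2 * ENNReal.ofReal (p.2 / r) ^ 2) ∂ν := by
        refine setLIntegral_mono' hbox fun p hp => ?_
        rw [← mul_pow]
        refine le_trans ?_ (ennreal_add_sq_le _ _)
        gcongr
        exact hf.enorm_convDilate_le hΦ hA hr hp
    _ = 2 * (∫⁻ p in ball z r ×ˢ Ioc 0 r, ‖convDilate Φ f₁ p‖ₑ ^ 2 ∂ν +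
          (M * N) ^ 2 * ∫⁻ p in ball z r ×ˢ Ioc 0 r, ENNReal.ofReal (p.2 / r) ^ 2 ∂ν) := by
        rw [lintegral_const_mul' _ _ ENNReal.ofNat_ne_top, lintegral_add_right _ (by fun_prop),
          lintegral_const_mul' _ _ (by finiteness)]
    _ ≤ 2 * (K ^ 2 * (N ^ 2 * volume (ball z (2 * r))) + (M * N) ^ 2 * volume (ball z r)) := by
        gcongr
        · exact (setLIntegral_le_lintegral _ _).trans
            (lintegral_enorm_sq_convDilate_indicator_le hK hf z (by positivity))
        · exact setLIntegral_box_ofReal_div_sq_le z hr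
    _ = _ := by
        rw [Measure.addHaar_ball_mul_of_pos volume z two_pos,
          ← Measure.addHaar_ball_center volume z r, ENNReal.ofReal_pow zero_le_two,
          ENNReal.ofReal_ofNat]
        push_cast
        rw [ENNReal.coe_toNNReal measure_ball_lt_top.ne]
        simp only [M, n]
        ring

theorem bmo_gives_carleson_measure_general (Φ : 𝓢(E, ℂ)) (hΦ : ∫ s, Φ s = 0) :
    ∃ C : ℝ≥0, ∀ (N : ℝ≥0) (f : E → F), HasBMOBound volume f N →
      HasCarlesonBound (squareFunctionMeasure Φ f) (C * N ^ 2) := by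
  have hΦ0 : 𝓕 Φ 0 = 0 := by simpa [SchwartzMap.fourier_coe, Real.fourier_eq] using hΦ
  obtain ⟨K, hK⟩ := exists_lintegral_enorm_sq_smul_scaleMeasure_le (𝓕 Φ) hΦ0
  have hA := SchwartzMap.norm_pow_mul_le_seminorm ℝ Φ (finrank ℝ E + 1)
  exact ⟨_, fun N f hf =>
    hf.hasCarlesonBound_squareFunctionMeasure (A := ⟨_, apply_nonneg _ _⟩) hΦ hK hA⟩

end Carleson

section EuclideanSpace

open Metric
open scoped NNReal

theorem memLp_two_ball_of_integrable_div_one_add_pow {E F : Type*} [NormedAddCommGroup E]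
    [MeasurableSpace E] [BorelSpace E] [NormedAddCommGroup F] {μ : Measure E} {f : E → F}
    (hf : AEStronglyMeasurable f μ) {m : ℕ}
    (hint : Integrable (fun t => ‖f t‖ ^ 2 / (1 + ‖t‖) ^ m) μ) (z : E) (r : ℝ) :
    MemLp f 2 (μ.restrict (ball z r)) := by
  rw [memLp_two_iff_integrable_sq_norm hf.restrict]
  refine (hint.const_mul ((1 + (‖z‖ + |r|)) ^ m)).integrableOn.mono'
    (hf.restrict.norm.pow 2) (ae_restrict_of_forall_mem measurableSet_ball fun t ht => ?_)
  have ht' : ‖t‖ ≤ ‖z‖ + |r| := by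
    have hle := (mem_ball_iff_norm.1 ht).le.trans (le_abs_self r)
    linarith [norm_le_norm_add_norm_sub z t, norm_sub_rev z t]
  rw [Real.norm_of_nonneg (by positivity), mul_div_assoc', le_div_iff₀ (by positivity), mul_comm]
  gcongr

theorem hasBMOBound_of_integral_le {E F : Type*} [NormedAddCommGroup E] [NormedSpace ℝ E]
    [FiniteDimensional ℝ E] [MeasurableSpace E] [BorelSpace E] [NormedAddCommGroup F]
    [NormedSpace ℝ F] {μ : Measure E} [μ.IsAddHaarMeasure] {f : E → F} {N : ℝ≥0}
    (hmem : ∀ z r, MemLp f 2 (μ.restrict (ball z r)))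
    (hosc : ∀ z r, 0 < r → (μ.real (ball z r))⁻¹ *
      ∫ t in ball z r, ‖f t - ⨍ u in ball z r, f u ∂μ‖ ^ 2 ∂μ ≤ N ^ 2) :
    HasBMOBound μ f N where
  memLp_ball := hmem
  lintegral_ball_le z r hr := by
    have hfin : μ (ball z r) ≠ ⊤ := measure_ball_lt_top.ne
    have := isFiniteMeasure_restrict.2 hfin
    have hsq : MemLp (fun t => f t - ⨍ u in ball z r, f u ∂μ) 2 (μ.restrict (ball z r)) :=
      (hmem z r).sub (memLp_const _)
    have hle := hosc z r hr
    have hpos : 0 < μ.real (ball z r) := ENNReal.toReal_pos (measure_ball_pos μ z hr).ne' hfin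
    rw [inv_mul_le_iff₀ hpos] at hle
    calc ∫⁻ t in ball z r, ‖f t - ⨍ u in ball z r, f u ∂μ‖ₑ ^ 2 ∂μ
        = ENNReal.ofReal (∫ t in ball z r, ‖f t - ⨍ u in ball z r, f u ∂μ‖ ^ 2 ∂μ) := by
          rw [ofReal_integral_eq_lintegral_ofReal
            ((memLp_two_iff_integrable_sq_norm hsq.aestronglyMeasurable).1 hsq)
            (ae_of_all _ fun _ => sq_nonneg _)]
          simp only [ENNReal.ofReal_pow (norm_nonneg _), ofReal_norm]
      _ ≤ ENNReal.ofReal (μ.real (ball z r) * N ^ 2) := ENNReal.ofReal_le_ofReal hle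
      _ = N ^ 2 * μ (ball z r) := by
          rw [mul_comm, ENNReal.ofReal_mul (by positivity), ENNReal.ofReal_pow N.coe_nonneg,
            ENNReal.ofReal_coe_nnreal, ofReal_measureReal hfin]

theorem cnv_dil_eq_convDilate (d : ℕ) (Φ f : Ed d → ℂ) (ε : ℝ) (s : Ed d) :
    cnv d (dil d Φ ε) f s = convDilate Φ f (s, ε) := by
  simp [cnv, dil, convDilate, dilate, convolution_lsmul_swap, Complex.real_smul]

theorem avgB_eq_setAverage (d : ℕ) (f : Ed d → ℂ) (z : Ed d) (r : ℝ) :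
    avgB d f z r = ⨍ t in ball z r, f t := (setAverage_eq _ _ _).symm

end EuclideanSpace

/-- Scalar-valued case of Lemma 3.1: for `f ∈ BMO`, `|Φ_ε*f(s)|² ds dε/ε` is a
Carleson measure with norm `≲ ‖f‖²_{BMO}`. -/
theorem bmo_gives_carleson_measure
    (d : ℕ) (hd : 1 ≤ d) (Φ : SchwartzMap (Ed d) ℂ) (hΦ0 : ∫ s, Φ s = 0) :
    ∃ C : ℝ, 0 < C ∧
      ∀ (N : ℝ), 0 ≤ N → ∀ f : Ed d → ℂ, Measurable f →
        Integrable (fun t : Ed d => ‖f t‖ ^ 2 / (1 + ‖t‖) ^ (d + 1)) volume →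
        (∀ (z : Ed d) (r : ℝ), 0 < r →
          (volume (Metric.ball z r)).toReal⁻¹ *
            ∫ t in Metric.ball z r, ‖f t - avgB d f z r‖ ^ 2 ≤ N ^ 2) →
        ∀ (z : Ed d) (r : ℝ), 0 < r →
          ∫ s in Metric.ball z r,
              ∫ ε in Set.Ioc (0 : ℝ) r, ‖cnv d (dil d (fun x => Φ x) ε) f s‖ ^ 2 / ε ≤
            C * N ^ 2 * (volume (Metric.ball z r)).toReal := by
  obtain ⟨C, hC⟩ := bmo_gives_carleson_measure_general (F := ℂ) Φ hΦ0
  refine ⟨C + 1, by positivity, fun N hN f hf hint hosc z r hr => ?_⟩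
  lift N to NNReal using hN
  simp only [avgB_eq_setAverage] at hosc
  simp only [cnv_dil_eq_convDilate]
  have hbmo : HasBMOBound volume f N := hasBMOBound_of_integral_le
    (memLp_two_ball_of_integrable_div_one_add_pow hf.aestronglyMeasurable hint) hosc
  refine ((hC N f hbmo).integral_le Φ.continuous hf.aestronglyMeasurable z hr).trans ?_
  push_cast [Measure.real]
  gcongr
  exact le_add_of_nonneg_right zero_le_one
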